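/- arXiv:2204.13453 — 2 statements merged into one kernel-verified Lean document; each statement's English description precedes it below -/
import Mathlib

section
/- Let 𝕜 be ℝ or ℂ, let A be a k × d matrix and B a k' × d matrix over 𝕜 with A Aᴴ invertible, let Δ_M = diag(μ₁,…,μ_{k'}) and Δ_N = diag(ν₁,…,ν_k) be diagonal real matrices, and let λ ≥ 0. Then the regularized energy E(C) = ‖C A − B‖_F² + λ ‖C Δ_N − Δ_M C‖_F², defined on k' × k matrices C over 𝕜, has a unique global minimizer. -/
open scoped BigOperators Matrix

/-- The Frobenius norm of a matrix: the square root of the sum of squared absolute values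
of its entries. -/
noncomputable def frobNorm {𝕜 m n : Type*} [RCLike 𝕜] [Fintype m] [Fintype n]
    (A : Matrix m n 𝕜) : ℝ :=
  Real.sqrt (∑ i, ∑ j, ‖A i j‖ ^ 2)

/-!
Stacking the two residuals turns the energy into the squared distance from `(B, 0)` to the image of
`C` under the linear map `C ↦ (C A, √λ • (C Δ_N − Δ_M C))`. A right inverse of `A` makes this map
injective, so the orthogonal projection of `(B, 0)` onto its range has exactly one preimage, and
that preimage is the minimizer.
-/

section LeastSquares

variable {𝕜 V E F : Type*} [RCLike 𝕜] [AddCommGroup V] [Module 𝕜 V]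
  [NormedAddCommGroup E] [InnerProductSpace 𝕜 E] [NormedAddCommGroup F] [InnerProductSpace 𝕜 F]

theorem norm_sub_sq_eq_add_norm_starProjection_sub_sq (K : Submodule 𝕜 E)
    [K.HasOrthogonalProjection] {v : E} (hv : v ∈ K) (b : E) :
    ‖v - b‖ ^ 2 = ‖v - K.starProjection b‖ ^ 2 + ‖K.starProjection b - b‖ ^ 2 := by
  have hmem : v - K.starProjection b ∈ K := K.sub_mem hv (K.starProjection_apply_mem b)
  have horth : inner 𝕜 (v - K.starProjection b) (K.starProjection b - b) = 0 := by
    rw [← neg_sub b, inner_neg_right, neg_eq_zero]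
    exact K.inner_right_of_mem_orthogonal hmem (K.sub_starProjection_mem_orthogonal b)
  simpa only [sub_add_sub_cancel, ← sq] using
    norm_add_sq_eq_norm_sq_add_norm_sq_of_inner_eq_zero _ _ horth

theorem existsUnique_forall_norm_map_sub_sq_le (L : V →ₗ[𝕜] E) [L.range.HasOrthogonalProjection]
    (hL : Function.Injective L) (b : E) :
    ∃! x₀ : V, ∀ x : V, ‖L x₀ - b‖ ^ 2 ≤ ‖L x - b‖ ^ 2 := by
  obtain ⟨x₀, hx₀⟩ : L.range.starProjection b ∈ L.range := L.range.starProjection_apply_mem b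
  have pythagoras (x : V) : ‖L x - b‖ ^ 2 = ‖L x - L x₀‖ ^ 2 + ‖L x₀ - b‖ ^ 2 := by
    rw [hx₀]
    exact norm_sub_sq_eq_add_norm_starProjection_sub_sq _ (L.mem_range_self x) b
  refine ⟨x₀, fun x => ?_, fun y hy => hL ?_⟩
  · rw [pythagoras x]
    exact le_add_of_nonneg_left (sq_nonneg _)
  · have hdist : ‖L y - L x₀‖ ^ 2 ≤ 0 := by linarith [hy x₀, pythagoras y]
    exact sub_eq_zero.mp (norm_eq_zero.mp (sq_nonpos_iff _ |>.mp hdist))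

/-- The linear map `x ↦ (L x, c • R x)` into the Hilbert sum of the two targets, which presents
least squares with data term `L` and penalty `R` of weight `‖c‖ ^ 2` as ordinary least squares. -/
def stackedMap (L : V →ₗ[𝕜] E) (R : V →ₗ[𝕜] F) (c : 𝕜) : V →ₗ[𝕜] WithLp 2 (E × F) :=
  (WithLp.linearEquiv 2 𝕜 (E × F)).symm ∘ₗ L.prod (c • R)

theorem stackedMap_injective {L : V →ₗ[𝕜] E} (hL : Function.Injective L) (R : V →ₗ[𝕜] F) (c : 𝕜) :
    Function.Injective (stackedMap L R c) :=
  fun _ _ h => hL (congrArg WithLp.fst h)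

theorem norm_stackedMap_sub_sq (L : V →ₗ[𝕜] E) (R : V →ₗ[𝕜] F) (c : 𝕜) (b : E) (x : V) :
    ‖stackedMap L R c x - WithLp.toLp 2 (b, 0)‖ ^ 2 = ‖L x - b‖ ^ 2 + ‖c‖ ^ 2 * ‖R x‖ ^ 2 := by
  simp [WithLp.prod_norm_sq_eq_of_L2, stackedMap, norm_smul, mul_pow]

theorem existsUnique_forall_norm_map_sub_sq_add_le [FiniteDimensional 𝕜 V] {L : V →ₗ[𝕜] E}
    (hL : Function.Injective L) (R : V →ₗ[𝕜] F) (b : E) {lam : ℝ} (hlam : 0 ≤ lam) :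
    ∃! x₀ : V, ∀ x : V,
      ‖L x₀ - b‖ ^ 2 + lam * ‖R x₀‖ ^ 2 ≤ ‖L x - b‖ ^ 2 + lam * ‖R x‖ ^ 2 := by
  have hweight : ‖((√lam : ℝ) : 𝕜)‖ ^ 2 = lam := by
    rw [RCLike.norm_ofReal, sq_abs, Real.sq_sqrt hlam]
  simpa only [norm_stackedMap_sub_sq, hweight] using
    existsUnique_forall_norm_map_sub_sq_le _ (stackedMap_injective hL R ((√lam : ℝ) : 𝕜))
      (WithLp.toLp 2 (b, 0))

end LeastSquares

theorem mul_left_injective_of_isUnit_mul {α m n p : Type*} [CommRing α] [Fintype n]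
    [DecidableEq n] [Fintype p] {A : Matrix n p α} {S : Matrix p n α} (h : IsUnit (A * S)) :
    Function.Injective fun C : Matrix m n α => C * A := by
  obtain ⟨T, hT⟩ := h.exists_right_inv
  exact Matrix.mul_left_injective_of_inv A (S * T) (by rw [← Matrix.mul_assoc, hT])

section Frobenius

variable {𝕜 m n p q r : Type*} [RCLike 𝕜] [Fintype m] [Fintype n] [Fintype p] [Fintype q]
  [Fintype r]

variable (𝕜 m n) in
/-- Matrices as Euclidean vectors of their entries; this carries the Frobenius norm to the norm of
an inner product space. -/
def euclideanVec : Matrix m n 𝕜 ≃ₗ[𝕜] EuclideanSpace 𝕜 (m × n) :=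
  (Matrix.ofLinearEquiv 𝕜).symm ≪≫ₗ (LinearEquiv.curry 𝕜 𝕜 m n).symm ≪≫ₗ
    (WithLp.linearEquiv 2 𝕜 (m × n → 𝕜)).symm

theorem norm_euclideanVec (A : Matrix m n 𝕜) : ‖euclideanVec 𝕜 m n A‖ = frobNorm A := by
  simp [EuclideanSpace.norm_eq, frobNorm, euclideanVec, Fintype.sum_prod_type]

theorem regularized_fmap_unique_minimizer_general [DecidableEq n] (A : Matrix n p 𝕜)
    (B : Matrix m p 𝕜) (hA : IsUnit (A * Aᴴ)) (R : Matrix m n 𝕜 →ₗ[𝕜] Matrix q r 𝕜) {lam : ℝ}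
    (hlam : 0 ≤ lam) :
    ∃! C₀ : Matrix m n 𝕜, ∀ C : Matrix m n 𝕜,
      frobNorm (C₀ * A - B) ^ 2 + lam * frobNorm (R C₀) ^ 2 ≤
        frobNorm (C * A - B) ^ 2 + lam * frobNorm (R C) ^ 2 := by
  have hinj : Function.Injective
      ((euclideanVec 𝕜 m p).toLinearMap ∘ₗ mulRightLinearMap m 𝕜 A) :=
    (euclideanVec 𝕜 m p).injective.comp (mul_left_injective_of_isUnit_mul hA)
  simpa [← map_sub, norm_euclideanVec] using existsUnique_forall_norm_map_sub_sq_add_le hinj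
    ((euclideanVec 𝕜 q r).toLinearMap ∘ₗ R) (euclideanVec 𝕜 m p B) hlam

end Frobenius

/-- For `𝕜 = ℝ` or `ℂ`, `A` a `k × d` and `B` a `k' × d` matrix over `𝕜`
with `A Aᴴ` invertible, real diagonal matrices `Δ_M = diag(μ)`, `Δ_N = diag(ν)` and
`λ ≥ 0`, the regularized energy `E(C) = ‖C A − B‖_F² + λ ‖C Δ_N − Δ_M C‖_F²` on `k' × k`
matrices has a unique global minimizer. -/
theorem regularized_fmap_unique_minimizer {𝕜 : Type*} [RCLike 𝕜] {k k' d : ℕ}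
    (A : Matrix (Fin k) (Fin d) 𝕜) (B : Matrix (Fin k') (Fin d) 𝕜)
    (hA : IsUnit (A * Aᴴ)) (μ : Fin k' → ℝ) (ν : Fin k → ℝ)
    (lam : ℝ) (hlam : 0 ≤ lam) :
    ∃! C₀ : Matrix (Fin k') (Fin k) 𝕜,
      ∀ C : Matrix (Fin k') (Fin k) 𝕜,
        frobNorm (C₀ * A - B) ^ 2 +
            lam * frobNorm (C₀ * Matrix.diagonal (fun j => (ν j : 𝕜)) -
              Matrix.diagonal (fun i => (μ i : 𝕜)) * C₀) ^ 2 ≤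
          frobNorm (C * A - B) ^ 2 +
            lam * frobNorm (C * Matrix.diagonal (fun j => (ν j : 𝕜)) -
              Matrix.diagonal (fun i => (μ i : 𝕜)) * C) ^ 2 :=
  regularized_fmap_unique_minimizer_general A B hA
    (mulRightLinearMap (Fin k') 𝕜 (Matrix.diagonal fun j => (ν j : 𝕜)) -
      mulLeftLinearMap (Fin k) 𝕜 (Matrix.diagonal fun i => (μ i : 𝕜))) hlam
end

section
/- Let E and F be real inner product spaces that are complete (Hilbert spaces), let φ : E → F be differentiable at p ∈ E, and let A : E → F be a continuous linear map such that for every f : F → ℝ differentiable at φ(p) and every X ∈ E, ⟪X, ∇(f ∘ φ)(p)⟫_E = ⟪A(X), ∇f(φ(p))⟫_F. Then A equals the Fréchet derivative Dφ_p of φ at p. -/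
open scoped RealInnerProductSpace

section

open ContinuousLinearMap InnerProductSpace
open scoped Gradient

variable {𝕜 E F : Type*} [RCLike 𝕜]
  [NormedAddCommGroup E] [InnerProductSpace 𝕜 E] [CompleteSpace E]
  [NormedAddCommGroup F] [InnerProductSpace 𝕜 F] [CompleteSpace F]

theorem hasGradientAt_toDual (w y : F) : HasGradientAt (toDual 𝕜 F w) w y :=
  (toDual 𝕜 F w).hasFDerivAt

theorem hasGradientAt_comp {f : F → 𝕜} {f' : F} {φ : E → F} {φ' : E →L[𝕜] F}
    {p : E} (hf : HasGradientAt f f' (φ p)) (hφ : HasFDerivAt φ φ' p) :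
    HasGradientAt (f ∘ φ) (adjoint φ' f') p := by
  have toDual_adjoint : toDual 𝕜 E (adjoint φ' f') = toDual 𝕜 F f' ∘L φ' := by
    ext X
    simp only [toDual_apply_apply, coe_comp, Function.comp_apply, adjoint_inner_left]
  rw [hasGradientAt_iff_hasFDerivAt, toDual_adjoint]
  exact hf.hasFDerivAt.comp p hφ

theorem pushforward_unique_general {φ : E → F} {p : E} (hφ : DifferentiableAt 𝕜 φ p) {A : E → F}
    (hA : ∀ (f : StrongDual 𝕜 F) (X : E), ⟪X, ∇ (f ∘ φ) p⟫_𝕜 = ⟪A X, ∇ f (φ p)⟫_𝕜) :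
    A = fderiv 𝕜 φ p := by
  ext X
  refine ext_inner_right 𝕜 fun w => ?_
  have gradient_toDual : ∇ (toDual 𝕜 F w) (φ p) = w := (hasGradientAt_toDual w _).gradient
  have gradient_toDual_comp : ∇ (toDual 𝕜 F w ∘ φ) p = adjoint (fderiv 𝕜 φ p) w :=
    (hasGradientAt_comp (hasGradientAt_toDual w _) hφ.hasFDerivAt).gradient
  calc
    ⟪A X, w⟫_𝕜 = ⟪A X, ∇ (toDual 𝕜 F w) (φ p)⟫_𝕜 := by rw [gradient_toDual]
    _ = ⟪X, ∇ (toDual 𝕜 F w ∘ φ) p⟫_𝕜 := (hA _ X).symm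
    _ = ⟪X, adjoint (fderiv 𝕜 φ p) w⟫_𝕜 := by rw [gradient_toDual_comp]
    _ = ⟪fderiv 𝕜 φ p X, w⟫_𝕜 := adjoint_inner_right _ X w

end

/-- Rigidity of the pushforward: if `φ : E → F` is differentiable at `p`
and a continuous linear map `A : E → F` satisfies
`⟪X, ∇(f ∘ φ)(p)⟫ = ⟪A X, ∇f(φ p)⟫` for every `f : F → ℝ` differentiable at `φ p` and
every `X ∈ E`, then `A` is the Fréchet derivative of `φ` at `p`. -/
theorem pushforward_unique {E F : Type*}
    [NormedAddCommGroup E] [InnerProductSpace ℝ E] [CompleteSpace E]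
    [NormedAddCommGroup F] [InnerProductSpace ℝ F] [CompleteSpace F]
    (φ : E → F) (p : E) (hφ : DifferentiableAt ℝ φ p) (A : E →L[ℝ] F)
    (hA : ∀ f : F → ℝ, DifferentiableAt ℝ f (φ p) →
      ∀ X : E, ⟪X, gradient (f ∘ φ) p⟫ = ⟪A X, gradient f (φ p)⟫) :
    A = fderiv ℝ φ p :=
  DFunLike.coe_injective <| pushforward_unique_general hφ fun f => hA f f.differentiableAt
end
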